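/- Min-entropy leftover hash bound: Let X, Z, S be finite sets, let F be a universal-2 hash family of functions from X to S with F drawn uniformly. Then for any sub-normalized non-negative function P_XZ on X × Z and any probability distribution R_Z on Z whose support contains the support of the Z-marginal of P_XZ, E_F[d(F|P_XZ)] ≤ (1/2) · sqrt(|S| · e^{−H_min(P_XZ|R_Z)}). -/

import Mathlib

/-!
The proof is the classical second-moment argument. Fix `z` and write `p x = P (x, z)`. The squared
`ℓ²` distance of the key distribution from `|S|⁻¹ ∑ p` is the collision weight
`∑_{x, x'} p x * p x' * 1[f x = f x']` minus `|S|⁻¹ (∑ p)²`. Averaging over a universal-2 family,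
the off-diagonal collisions contribute at most `|S|⁻¹ (∑ p)²`, so only the diagonal `∑ p²` survives
(`sum_sq_dev_le`). If `P (x, z) ≤ M * R z`, this diagonal is at most `M * R z * P_Z(z)`.
The Cauchy–Schwarz inequality over all triples (hash index, key, `z`), with weight `R z`, turns the
second-moment bound into the `ℓ¹` bound `√(|S| * M)` (`expSecurity_le_of_le_mul`).
For `P ≠ 0` the choice `M = max P / R = exp (-H_min)` gives the result, and `P = 0` is trivial.
-/


open Real Finset

/-- Variational distance `d(P,Q) = (1/2) ∑ |P a - Q a|`. -/
noncomputable def vdist {A : Type*} [Fintype A] (P Q : A → ℝ) : ℝ :=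
  (1 / 2) * ∑ a, |P a - Q a|

/-- Sub-normalized non-negative function. -/
def Subnormalized {A : Type*} [Fintype A] (P : A → ℝ) : Prop :=
  (∀ a, 0 ≤ P a) ∧ ∑ a, P a ≤ 1

/-- Probability distribution on a finite set. -/
def IsDist {A : Type*} [Fintype A] (P : A → ℝ) : Prop :=
  (∀ a, 0 ≤ P a) ∧ ∑ a, P a = 1

/-- Z-marginal `P_Z(z) = ∑_x P(x,z)`. -/
noncomputable def margZ {X Z : Type*} [Fintype X] (P : X × Z → ℝ) : Z → ℝ :=
  fun z => ∑ x, P (x, z)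

/-- Key distribution `P_SZ(s,z) = ∑_{x ∈ f⁻¹(s)} P(x,z)`. -/
noncomputable def keyDist {X Z S : Type*} [Fintype X] [DecidableEq S]
    (f : X → S) (P : X × Z → ℝ) : S × Z → ℝ :=
  fun sz => ∑ x, if f x = sz.1 then P (x, sz.2) else 0

/-- Security `d(f|P_XZ) = d(P_SZ, P_unif × P_Z)`. -/
noncomputable def security {X Z S : Type*} [Fintype X] [Fintype Z] [Fintype S] [DecidableEq S]
    (f : X → S) (P : X × Z → ℝ) : ℝ :=
  vdist (keyDist f P) (fun sz => (Fintype.card S : ℝ)⁻¹ * margZ P sz.2)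

/-- Universal-2 hash family indexed by `I`: for `x ≠ x'`,
`Pr[F(x) = F(x')] ≤ 1/|S|` where `F` is uniform on `I`. -/
def Universal2 {I X S : Type*} [Fintype I] [Fintype S] [DecidableEq S]
    (H : I → X → S) : Prop :=
  ∀ x x' : X, x ≠ x' →
    ((Finset.univ.filter fun i => H i x = H i x').card : ℝ) / (Fintype.card I : ℝ)
      ≤ 1 / (Fintype.card S : ℝ)

/-- Expectation of the security over the uniformly random hash function. -/
noncomputable def expSecurity {I X Z S : Type*} [Fintype I] [Fintype X] [Fintype Z]
    [Fintype S] [DecidableEq S] (H : I → X → S) (P : X × Z → ℝ) : ℝ :=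
  (Fintype.card I : ℝ)⁻¹ * ∑ i, security (H i) P

/-- Conditional Rényi entropy of order 2 relative to `R`:
`H_2(P|R) = -log ∑_{x, z ∈ supp R} P(x,z)² / R(z)`. -/
noncomputable def H2cond {X Z : Type*} [Fintype X] [Fintype Z]
    (P : X × Z → ℝ) (R : Z → ℝ) : ℝ :=
  - Real.log (∑ xz : X × Z, if R xz.2 ≠ 0 then P xz ^ 2 / R xz.2 else 0)

/-- Conditional min-entropy relative to `R`:
`H_min(P|R) = -log max_{x, z ∈ supp R} P(x,z)/R(z)`. -/
noncomputable def Hmin {X Z : Type*} (P : X × Z → ℝ) (R : Z → ℝ) : ℝ :=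
  - Real.log (sSup {v : ℝ | ∃ x z, R z ≠ 0 ∧ v = P (x, z) / R z})

/-- Smooth min-entropy over sub-normalized functions. -/
noncomputable def barHminEps {X Z : Type*} [Fintype X] [Fintype Z] (ε : ℝ)
    (P : X × Z → ℝ) (R : Z → ℝ) : ℝ :=
  sSup {h : ℝ | ∃ Q : X × Z → ℝ, Subnormalized Q ∧ vdist P Q ≤ ε ∧ h = Hmin Q R}

/-- Smooth min-entropy over normalized distributions. -/
noncomputable def HminEps {X Z : Type*} [Fintype X] [Fintype Z] (ε : ℝ)
    (P : X × Z → ℝ) (R : Z → ℝ) : ℝ :=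
  sSup {h : ℝ | ∃ Q : X × Z → ℝ, IsDist Q ∧ vdist P Q ≤ ε ∧ h = Hmin Q R}

/-- Conditional inf-spectral entropy
`H_s^ε(P|R) = sup{r : P{(x,z) : -log(P(x,z)/R(z)) ≤ r} ≤ ε}`. -/
noncomputable def Hspec {X Z : Type*} [Fintype X] [Fintype Z] (ε : ℝ)
    (P : X × Z → ℝ) (R : Z → ℝ) : ℝ :=
  sSup {r : ℝ |
    (∑ xz : X × Z, if - Real.log (P xz / R xz.2) ≤ r then P xz else 0) ≤ ε}

/-- Maximal key length `ℓ(P,ε) = sup{log|S| : ∃ f : X → S, d(f|P) ≤ ε}`. -/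
noncomputable def keyLen {X Z : Type*} [Fintype X] [Fintype Z]
    (P : X × Z → ℝ) (ε : ℝ) : ℝ :=
  sSup {l : ℝ | ∃ m : ℕ, 0 < m ∧ l = Real.log m ∧ ∃ f : X → Fin m, security f P ≤ ε}

/-- `φ(ρ|P) = log ∑_{z ∈ supp P_Z} P_Z(z) (∑_x P_{X|Z}(x|z)^{1/(1-ρ)})^{1-ρ}`. -/
noncomputable def phi {X Z : Type*} [Fintype X] [Fintype Z] (ρ : ℝ) (P : X × Z → ℝ) : ℝ :=
  Real.log (∑ z, if margZ P z ≠ 0 then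
    margZ P z * (∑ x, (P (x, z) / margZ P z) ^ ((1 : ℝ) / (1 - ρ))) ^ (1 - ρ) else 0)

/-- Conditional Rényi entropy of order `1+θ` relative to `R`:
`H_{1+θ}(P|R) = -(1/θ) log ∑_{x, z ∈ supp R} R(z) (P(x,z)/R(z))^{1+θ}`. -/
noncomputable def Hrenyi {X Z : Type*} [Fintype X] [Fintype Z] (θ : ℝ)
    (P : X × Z → ℝ) (R : Z → ℝ) : ℝ :=
  -(1 / θ) * Real.log (∑ xz : X × Z,
    if R xz.2 ≠ 0 then R xz.2 * (P xz / R xz.2) ^ (1 + θ) else 0)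

/-- The squared `ℓ²` norm of the push-forward of `p` along `f` is the collision weight of `f`. -/
lemma sum_sq_fiber {X S : Type*} [Fintype X] [Fintype S] [DecidableEq S] (f : X → S) (p : X → ℝ) :
    ∑ s, (∑ x, if f x = s then p x else 0) ^ 2 =
      ∑ x, ∑ x', p x * p x' * (if f x = f x' then 1 else 0) := by
  simp_rw [sq, Finset.sum_mul_sum]
  rw [Finset.sum_comm]
  refine Finset.sum_congr rfl fun x _ => ?_
  rw [Finset.sum_comm]
  refine Finset.sum_congr rfl fun x' _ => ?_
  rw [Finset.sum_eq_single (f x)]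
  · by_cases h : f x = f x'
    · simp [h]
    · simp [h, Ne.symm h]
  · intro s _ hs
    simp [Ne.symm hs]
  · simp

lemma sum_fiber {X S : Type*} [Fintype X] [Fintype S] [DecidableEq S] (f : X → S) (p : X → ℝ) :
    ∑ s, (∑ x, if f x = s then p x else 0) = ∑ x, p x := by
  rw [Finset.sum_comm]
  simp

/-- The squared `ℓ²` distance of the push-forward of `p` from the flat function of the same mass is
the collision weight minus `|S|⁻¹ (∑ p)²`. -/
lemma sum_sq_dev_eq {X S : Type*} [Fintype X] [Fintype S] [Nonempty S] [DecidableEq S]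
    (f : X → S) (p : X → ℝ) :
    ∑ s, ((∑ x, if f x = s then p x else 0) - (Fintype.card S : ℝ)⁻¹ * ∑ x, p x) ^ 2 =
      ∑ x, ∑ x', p x * p x' * (if f x = f x' then 1 else 0)
        - (Fintype.card S : ℝ)⁻¹ * (∑ x, p x) ^ 2 := by
  have hS : (Fintype.card S : ℝ) ≠ 0 := by exact_mod_cast Fintype.card_ne_zero
  simp_rw [sub_sq, Finset.sum_add_distrib, Finset.sum_sub_distrib, ← Finset.sum_mul,
    ← Finset.mul_sum]
  rw [sum_sq_fiber, sum_fiber, Finset.sum_const, Finset.card_univ, nsmul_eq_mul]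
  field_simp
  ring

/-- Second-moment bound: in expectation over a universal-2 family, the squared `ℓ²` distance of the
push-forward of `p` from flat is at most `∑ p²` (here multiplied by the size of the family). -/
lemma sum_sq_dev_le {I X S : Type*} [Fintype I] [Nonempty I] [Fintype X] [Fintype S]
    [DecidableEq S] (H : I → X → S) (hH : Universal2 H) (p : X → ℝ) (hp : ∀ x, 0 ≤ p x) :
    ∑ i, ∑ s, ((∑ x, if H i x = s then p x else 0) - (Fintype.card S : ℝ)⁻¹ * ∑ x, p x) ^ 2 ≤
      (Fintype.card I : ℝ) * ∑ x, p x ^ 2 := by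
  classical
  rcases isEmpty_or_nonempty S with hS | hS
  · simp only [Finset.univ_eq_empty, Finset.sum_empty, Finset.sum_const_zero]
    positivity
  have hI : (0 : ℝ) < Fintype.card I := by exact_mod_cast Fintype.card_pos
  simp_rw [sum_sq_dev_eq]
  rw [Finset.sum_sub_distrib, Finset.sum_const, Finset.card_univ, nsmul_eq_mul, sub_le_iff_le_add,
    Finset.sum_comm]
  have key : ∀ x x', ∑ i, p x * p x' * (if H i x = H i x' then (1 : ℝ) else 0) ≤
      (if x = x' then (Fintype.card I : ℝ) * (p x * p x') else 0)
        + (Fintype.card I : ℝ) * (Fintype.card S : ℝ)⁻¹ * (p x * p x') := by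
    intro x x'
    have hpp : 0 ≤ p x * p x' := mul_nonneg (hp x) (hp x')
    rw [← Finset.mul_sum]
    by_cases h : x = x'
    · subst h
      simp only [if_true, Finset.sum_const, Finset.card_univ, nsmul_eq_mul, mul_one]
      have : 0 ≤ (Fintype.card I : ℝ) * (Fintype.card S : ℝ)⁻¹ * (p x * p x) := by positivity
      linarith
    · have h2 := hH x x' h
      rw [div_le_iff₀ hI] at h2
      rw [if_neg h, zero_add, Finset.sum_boole]
      calc _ ≤ p x * p x' * (1 / (Fintype.card S : ℝ) * Fintype.card I) :=
            mul_le_mul_of_nonneg_left h2 hpp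
        _ = _ := by ring
  calc ∑ x, ∑ i, ∑ x', p x * p x' * (if H i x = H i x' then (1 : ℝ) else 0)
      = ∑ x, ∑ x', ∑ i, p x * p x' * (if H i x = H i x' then (1 : ℝ) else 0) :=
        Finset.sum_congr rfl fun x _ => Finset.sum_comm
    _ ≤ ∑ x, ∑ x', ((if x = x' then (Fintype.card I : ℝ) * (p x * p x') else 0)
        + (Fintype.card I : ℝ) * (Fintype.card S : ℝ)⁻¹ * (p x * p x')) :=
        Finset.sum_le_sum fun x _ => Finset.sum_le_sum fun x' _ => key x x'
    _ = _ := by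
        simp_rw [Finset.sum_add_distrib, Finset.sum_ite_eq, Finset.mem_univ, if_true,
          ← Finset.mul_sum]
        rw [sq (∑ x, p x), Finset.sum_mul]
        simp_rw [sq]
        ring

/-- The leftover hash bound with the min-entropy replaced by any `M` satisfying
`P (x, z) ≤ M * R z`. -/
lemma expSecurity_le_of_le_mul {I X Z S : Type*} [Fintype I] [Nonempty I] [Fintype X]
    [Fintype Z] [Fintype S] [DecidableEq S]
    (H : I → X → S) (hH : Universal2 H) (P : X × Z → ℝ) (hP : Subnormalized P)
    (R : Z → ℝ) (hR : IsDist R) (M : ℝ) (hM : 0 ≤ M) (hle : ∀ x z, P (x, z) ≤ M * R z) :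
    expSecurity H P ≤ (1 / 2) * Real.sqrt ((Fintype.card S : ℝ) * M) := by
  have hI : (0 : ℝ) < Fintype.card I := by exact_mod_cast Fintype.card_pos
  let D : I → S → Z → ℝ := fun i s z =>
    (∑ x, if H i x = s then P (x, z) else 0) - (Fintype.card S : ℝ)⁻¹ * ∑ x, P (x, z)
  have hexp : expSecurity H P =
      (1 / 2) * ((Fintype.card I : ℝ)⁻¹ * ∑ t : I × S × Z, |D t.1 t.2.1 t.2.2|) := by
    rw [Fintype.sum_prod_type]
    simp only [expSecurity, security, vdist, keyDist, margZ, D, ← Finset.mul_sum]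
    ring
  have hD0 : ∀ i s z, R z = 0 → D i s z = 0 := by
    intro i s z hz
    have : ∀ x, P (x, z) = 0 := fun x =>
      le_antisymm (by simpa [hz] using hle x z) (hP.1 _)
    simp [D, this]
  have hmom : ∀ z, ∑ i, ∑ s, D i s z ^ 2 / R z ≤
      (Fintype.card I : ℝ) * M * ∑ x, P (x, z) := by
    intro z
    rcases (hR.1 z).eq_or_lt with hz | hz
    · have hs : 0 ≤ ∑ x, P (x, z) := Finset.sum_nonneg fun x _ => hP.1 _
      simp only [← hz, div_zero, Finset.sum_const_zero]
      positivity
    · simp_rw [← Finset.sum_div]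
      rw [div_le_iff₀ hz]
      calc _ ≤ (Fintype.card I : ℝ) * ∑ x, P (x, z) ^ 2 :=
            sum_sq_dev_le H hH (fun x => P (x, z)) fun x => hP.1 _
        _ ≤ (Fintype.card I : ℝ) * ∑ x, (M * R z) * P (x, z) := by
            gcongr with x
            rw [sq]
            exact mul_le_mul_of_nonneg_right (hle x z) (hP.1 _)
        _ = _ := by rw [← Finset.mul_sum]; ring
  have hA : ∑ t : I × S × Z, D t.1 t.2.1 t.2.2 ^ 2 / R t.2.2 ≤ (Fintype.card I : ℝ) * M := by
    calc _ = ∑ z, ∑ i, ∑ s, D i s z ^ 2 / R z := by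
          rw [Fintype.sum_prod_type, Finset.sum_comm (γ := Z)]
          exact Finset.sum_congr rfl fun i _ => Fintype.sum_prod_type_right _
      _ ≤ ∑ z, (Fintype.card I : ℝ) * M * ∑ x, P (x, z) := Finset.sum_le_sum fun z _ => hmom z
      _ = (Fintype.card I : ℝ) * M * ∑ a, P a := by
          rw [← Finset.mul_sum, Fintype.sum_prod_type_right]
      _ ≤ _ := mul_le_of_le_one_right (by positivity) hP.2
  have hB : ∑ t : I × S × Z, R t.2.2 = (Fintype.card I : ℝ) * Fintype.card S := by
    simp_rw [Fintype.sum_prod_type, hR.2]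
    simp
  have hCS : (∑ t : I × S × Z, |D t.1 t.2.1 t.2.2|) ^ 2 ≤
      (∑ t : I × S × Z, D t.1 t.2.1 t.2.2 ^ 2 / R t.2.2) * ∑ t : I × S × Z, R t.2.2 := by
    refine Finset.sum_sq_le_sum_mul_sum_of_sq_le_mul _
      (fun t _ => div_nonneg (sq_nonneg _) (hR.1 _)) (fun t _ => hR.1 _) fun t _ => ?_
    rw [sq_abs]
    refine le_of_eq ?_
    by_cases hz : R t.2.2 = 0
    · simp [hz, hD0 _ _ _ hz]
    · rw [div_mul_cancel₀ _ hz]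
  rw [hexp]
  refine mul_le_mul_of_nonneg_left (Real.le_sqrt_of_sq_le ?_) (by norm_num)
  rw [mul_pow, inv_pow, inv_mul_le_iff₀ (by positivity)]
  calc _ ≤ _ := hCS
    _ ≤ (Fintype.card I : ℝ) * M * ((Fintype.card I : ℝ) * Fintype.card S) := by
        rw [hB]
        exact mul_le_mul_of_nonneg_right hA (by positivity)
    _ = _ := by ring

/-- Min-entropy leftover hash bound. -/
theorem leftover_hash_min_entropy {I X Z S : Type*} [Fintype I] [Nonempty I] [Fintype X]
    [Fintype Z] [Fintype S] [DecidableEq S]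
    (H : I → X → S) (hH : Universal2 H)
    (P : X × Z → ℝ) (hP : Subnormalized P)
    (R : Z → ℝ) (hR : IsDist R)
    (hsupp : ∀ z, margZ P z ≠ 0 → R z ≠ 0) :
    expSecurity H P ≤
      (1 / 2) * Real.sqrt ((Fintype.card S : ℝ) * Real.exp (- Hmin P R)) := by
  by_cases h0 : ∀ a, P a = 0
  -- For `P = 0`, `Hmin` is the junk value `-log 0`, but the left-hand side vanishes.
  · have : expSecurity H P = 0 := by
      simp [expSecurity, security, vdist, keyDist, margZ, h0]
    rw [this]
    positivity
  push Not at h0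
  obtain ⟨⟨x₀, z₀⟩, h0⟩ := h0
  have hPR : ∀ x z, R z = 0 → P (x, z) = 0 := by
    intro x z hz
    have hm : margZ P z = 0 := by_contra fun h => hsupp z h hz
    exact (Finset.sum_eq_zero_iff_of_nonneg fun x _ => hP.1 _).1 hm x (Finset.mem_univ x)
  set V : Set ℝ := {v : ℝ | ∃ x z, R z ≠ 0 ∧ v = P (x, z) / R z} with hV
  have hbdd : BddAbove V := by
    refine ((Set.finite_range fun a : X × Z => P a / R a.2).subset ?_).bddAbove
    rintro v ⟨x, z, -, rfl⟩
    exact ⟨(x, z), rfl⟩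
  have hpos : 0 < sSup V := by
    have hz₀ : R z₀ ≠ 0 := fun h => h0 (hPR x₀ z₀ h)
    exact (div_pos ((hP.1 _).lt_of_ne' h0) ((hR.1 _).lt_of_ne' hz₀)).trans_le
      (le_csSup hbdd ⟨x₀, z₀, hz₀, rfl⟩)
  have hexp : Real.exp (- Hmin P R) = sSup V := by
    rw [Hmin, neg_neg, Real.exp_log hpos]
  rw [hexp]
  refine expSecurity_le_of_le_mul H hH P hP R hR _ hpos.le fun x z => ?_
  by_cases hz : R z = 0
  · simp [hz, hPR x z hz]
  · exact (div_le_iff₀ ((hR.1 z).lt_of_ne' hz)).1 (le_csSup hbdd ⟨x, z, hz, rfl⟩)
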